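/- Let X be a real Banach space which is a universal BPB domain space (the pair (X,Z) has the Bishop–Phelps–Bollobás property for every real Banach space Z), and suppose X admits an equivalent uniformly convex norm. Then the set of strongly exposed points of the closed unit ball B_X is dense in the unit sphere S_X, where x ∈ S_X is a strongly exposed point of B_X if there exists a continuous linear functional f on X with ‖f‖ = 1 and f(x) = 1 such that for every ε > 0 there is δ > 0 with: every z ∈ B_X satisfying f(z) > 1 − δ has ‖z − x‖ < ε. -/

import Mathlib

open scoped ENNReal

/-- A pair `(X, Y)` of normed spaces has the Bishop–Phelps–Bollobás property with the
function `η : (0,1) → (0,∞)` (encoded as `η : ℝ → ℝ`, relevant only on `(0,1)`). -/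
def BPBpWith (X Y : Type*) [NormedAddCommGroup X] [NormedSpace ℝ X]
    [NormedAddCommGroup Y] [NormedSpace ℝ Y] (η : ℝ → ℝ) : Prop :=
  ∀ ε ∈ Set.Ioo (0 : ℝ) 1, ∀ (T₀ : X →L[ℝ] Y) (x₀ : X),
    ‖T₀‖ = 1 → ‖x₀‖ = 1 → 1 - η ε < ‖T₀ x₀‖ →
      ∃ (S : X →L[ℝ] Y) (x : X),
        ‖x‖ = 1 ∧ ‖S‖ = 1 ∧ ‖S x‖ = 1 ∧ ‖x - x₀‖ < ε ∧ ‖S - T₀‖ < ε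

/-- The pair `(X, Y)` has the Bishop–Phelps–Bollobás property. -/
def HasBPBp (X Y : Type*) [NormedAddCommGroup X] [NormedSpace ℝ X]
    [NormedAddCommGroup Y] [NormedSpace ℝ Y] : Prop :=
  ∃ η : ℝ → ℝ, (∀ ε ∈ Set.Ioo (0 : ℝ) 1, 0 < η ε) ∧ BPBpWith X Y η

/-- `x` is a strongly exposed point of the closed unit ball of `X`: `x` lies on the unit
sphere and there is a norm-one functional `f` with `f x = 1` such that points of the ball
where `f` is nearly `1` are close to `x`. -/
def StronglyExposedPointOfBall (X : Type*) [NormedAddCommGroup X] [NormedSpace ℝ X]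
    (x : X) : Prop :=
  ‖x‖ = 1 ∧ ∃ f : X →L[ℝ] ℝ, ‖f‖ = 1 ∧ f x = 1 ∧
    ∀ ε > (0 : ℝ), ∃ δ > (0 : ℝ), ∀ z ∈ Metric.closedBall (0 : X) 1,
      1 - δ < f z → ‖z - x‖ < ε

/-- A local uniform rotundity condition in quadratic form. -/
def QuadLUR (Y : Type*) [NormedAddCommGroup Y] : Prop :=
  ∀ (u : Y) (ε : ℝ), 0 < ε → ∃ θ : ℝ, 0 < θ ∧ ∀ v : Y,
    2 * ‖u‖ ^ 2 + 2 * ‖v‖ ^ 2 - ‖u + v‖ ^ 2 < θ → ‖v - u‖ < ε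

theorem quadLUR_of_uniformConvex (B : Type*) [NormedAddCommGroup B] [NormedSpace ℝ B]
    [UniformConvexSpace B] : QuadLUR B := by
  intro b ε hε
  by_cases hb : b = 0
  · subst hb
    refine ⟨ε ^ 2, by positivity, fun v hv => ?_⟩
    simp only [norm_zero, zero_add, sub_zero] at hv ⊢
    exact lt_of_pow_lt_pow_left₀ 2 hε.le (by nlinarith)
  have hr : 0 < ‖b‖ := norm_pos_iff.2 hb
  obtain ⟨δ, hδ, H⟩ := exists_forall_closed_ball_dist_add_le_two_mul_sub B (half_pos hε) ‖b‖
  set r := ‖b‖ with hrdef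
  obtain ⟨s, hs, hsr, hsd, hse⟩ : ∃ s : ℝ, 0 < s ∧ s ≤ r ∧ s ≤ δ / 3 ∧ s ≤ ε / 2 :=
    ⟨min r (min (δ / 3) (ε / 2)), by positivity, min_le_left _ _,
      (min_le_right _ _).trans (min_le_left _ _), (min_le_right _ _).trans (min_le_right _ _)⟩
  refine ⟨s ^ 2, by positivity, fun v hv => ?_⟩
  have hn : ‖b + v‖ ≤ r + ‖v‖ := norm_add_le _ _
  have hn0 : 0 ≤ ‖b + v‖ := norm_nonneg _
  have hv0 : 0 ≤ ‖v‖ := norm_nonneg _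
  have h1 : |r - ‖v‖| < s := by
    apply abs_lt_of_sq_lt_sq _ hs.le
    nlinarith
  obtain ⟨h1a, h1b⟩ := abs_lt.1 h1
  have hvpos : 0 < ‖v‖ := by linarith
  have h2 : r + ‖v‖ - s < ‖b + v‖ := by
    apply lt_of_pow_lt_pow_left₀ 2 hn0
    nlinarith [sq_nonneg (r - ‖v‖)]
  set w : B := (r / ‖v‖) • v with hw
  have hwn : ‖w‖ = r := by
    rw [hw, norm_smul, Real.norm_of_nonneg (by positivity)]
    field_simp
  have hwv : ‖w - v‖ < s := by
    have : w - v = ((r - ‖v‖) / ‖v‖) • v := by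
      rw [hw, sub_div, div_self hvpos.ne', sub_smul, one_smul]
    rw [this, norm_smul, norm_div, norm_norm, Real.norm_eq_abs, div_mul_cancel₀ _ hvpos.ne']
    exact h1
  have h3 : ‖b + v‖ ≤ ‖b + w‖ + ‖w - v‖ := by
    have : b + v = (b + w) - (w - v) := by abel
    rw [this]; exact norm_sub_le _ _
  have h4 : ‖b - w‖ < ε / 2 := by
    by_contra hcon
    have := H (le_refl r) hwn.le (not_lt.1 hcon)
    linarith
  have h5 : ‖v - b‖ ≤ ‖b - w‖ + ‖w - v‖ := by
    have : v - b = -((b - w) + (w - v)) := by abel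
    rw [this, norm_neg]; exact norm_add_le _ _
  linarith

theorem quad_snd (A B : Type*) [NormedAddCommGroup A]
    [NormedAddCommGroup B] (u v : WithLp 2 (A × B)) :
    2 * ‖u.snd‖ ^ 2 + 2 * ‖v.snd‖ ^ 2 - ‖u.snd + v.snd‖ ^ 2 ≤
      2 * ‖u‖ ^ 2 + 2 * ‖v‖ ^ 2 - ‖u + v‖ ^ 2 := by
  rw [WithLp.prod_norm_sq_eq_of_L2 u, WithLp.prod_norm_sq_eq_of_L2 v,
    WithLp.prod_norm_sq_eq_of_L2 (u + v), WithLp.add_fst, WithLp.add_snd]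
  have h := norm_add_le u.fst v.fst
  have h0 := norm_nonneg (u.fst + v.fst)
  nlinarith [sq_nonneg (‖u.fst‖ - ‖v.fst‖)]

theorem stronglyExposed_of_attains {X Y : Type*} [NormedAddCommGroup X] [NormedSpace ℝ X]
    [NormedAddCommGroup Y] [NormedSpace ℝ Y] (hY : QuadLUR Y) (S : X →L[ℝ] Y) (x : X)
    (hx : ‖x‖ = 1) (hS : ‖S‖ ≤ 1) (hSx : ‖S x‖ = 1) (k : ℝ) (hk : 0 < k)
    (hlow : ∀ z, k * ‖z‖ ≤ ‖S z‖) : StronglyExposedPointOfBall X x := by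
  obtain ⟨g, hg, hgx⟩ := exists_dual_vector'' ℝ (S x)
  have hgx' : g (S x) = 1 := by rw [hgx, hSx]; simp
  refine ⟨hx, g.comp S, ?_, hgx', ?_⟩
  · apply le_antisymm
    · refine (g.opNorm_comp_le S).trans ?_
      nlinarith [norm_nonneg g, norm_nonneg S]
    · have h := (g.comp S).le_opNorm x
      rw [hx, mul_one, ContinuousLinearMap.comp_apply, hgx'] at h
      simpa using h
  · intro ε hε
    obtain ⟨θ, hθ, H⟩ := hY (S x) (k * ε) (by positivity)
    refine ⟨min 1 (θ / 4), by positivity, fun z hz hfz => ?_⟩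
    rw [mem_closedBall_zero_iff] at hz
    set d := min 1 (θ / 4)
    have hd1 : d ≤ 1 := min_le_left _ _
    have hd2 : d ≤ θ / 4 := min_le_right _ _
    have hd0 : 0 < d := by positivity
    have hSz : ‖S z‖ ≤ 1 := by
      refine (S.le_opNorm z).trans ?_
      nlinarith [norm_nonneg S, norm_nonneg z]
    have h1 : 2 - d < ‖S x + S z‖ := by
      have h := g.le_opNorm (S x + S z)
      rw [map_add, hgx'] at h
      have h' := (le_abs_self _).trans h
      have hfz' : 1 - d < g (S z) := hfz
      nlinarith [norm_nonneg (S x + S z)]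
    have h2 := H (S z) (by rw [hSx]; nlinarith [norm_nonneg (S z)])
    rw [← map_sub] at h2
    exact lt_of_mul_lt_mul_left ((hlow _).trans_lt h2) hk.le

theorem exists_normalized {X Y : Type*} [NormedAddCommGroup X] [NormedSpace ℝ X]
    [NormedAddCommGroup Y] [NormedSpace ℝ Y] (T : X →L[ℝ] Y) (hTpos : 0 < ‖T‖) (hT1 : ‖T‖ ≤ 1) :
    ∃ T' : X →L[ℝ] Y, ‖T'‖ = 1 ∧ ∀ x, ‖T x‖ ≤ ‖T' x‖ := by
  have hinv : 1 ≤ ‖T‖⁻¹ := (one_le_inv₀ hTpos).2 hT1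
  refine ⟨‖T‖⁻¹ • T, ?_, fun x => ?_⟩
  · rw [norm_smul, norm_inv, norm_norm, inv_mul_cancel₀ hTpos.ne']
  · have h : (‖T‖⁻¹ • T) x = ‖T‖⁻¹ • T x := rfl
    rw [h, norm_smul, norm_inv, norm_norm]
    nlinarith [norm_nonneg (T x)]

theorem exists_good_target.{u} (X : Type u) [NormedAddCommGroup X] [NormedSpace ℝ X]
    [CompleteSpace X] (X' : Type u) [NormedAddCommGroup X'] [NormedSpace ℝ X']
    [UniformConvexSpace X'] (q : X →L[ℝ] X') (k : ℝ) (hk : 0 < k)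
    (hq1 : ∀ x, ‖q x‖ ≤ ‖x‖) (hq2 : ∀ x, k * ‖x‖ ≤ ‖q x‖) (x₀ : X) (hx₀ : ‖x₀‖ = 1)
    (a : ℝ) (ha0 : 0 < a) (ha1 : a < 1) :
    ∃ (Y : Type u) (_ : NormedAddCommGroup Y) (_ : NormedSpace ℝ Y) (_ : CompleteSpace Y)
      (T : X →L[ℝ] Y), QuadLUR Y ∧ ‖T‖ = 1 ∧ a ≤ ‖T x₀‖ ∧ ∀ z, k * ‖z‖ ≤ ‖T z‖ := by
  obtain ⟨f, hf, hfx⟩ := exists_dual_vector'' ℝ x₀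
  have hfx' : f x₀ = 1 := by rw [hfx, hx₀]; simp
  have hf1 : ∀ x, ‖f x‖ ≤ ‖x‖ := fun x => (f.le_opNorm x).trans (by nlinarith [norm_nonneg x])
  obtain ⟨b, hb, hab⟩ : ∃ b : ℝ, 0 < b ∧ a ^ 2 + b ^ 2 = 1 :=
    ⟨√(1 - a ^ 2), Real.sqrt_pos.2 (by nlinarith), by
      rw [Real.sq_sqrt (by nlinarith)]; ring⟩
  let L : X →L[ℝ] WithLp 2 ((X' × ℝ) × X') :=
    ((WithLp.prodContinuousLinearEquiv 2 ℝ (X' × ℝ) X').symm : _ →L[ℝ] _).comp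
      ((a • (q.prod f)).prod (b • q))
  have hfst : ∀ x, (L x).fst = a • (q x, f x) := fun x => rfl
  have hsnd : ∀ x, (L x).snd = b • q x := fun x => rfl
  have hLn : ∀ x, ‖L x‖ ^ 2 = a ^ 2 * (max ‖q x‖ ‖f x‖) ^ 2 + b ^ 2 * ‖q x‖ ^ 2 := by
    intro x
    rw [WithLp.prod_norm_sq_eq_of_L2, hfst, hsnd, norm_smul, norm_smul, Prod.norm_def,
      Real.norm_of_nonneg ha0.le, Real.norm_of_nonneg hb.le]
    ring
  have hup : ∀ x, ‖L x‖ ≤ ‖x‖ := by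
    intro x
    apply le_of_sq_le_sq _ (norm_nonneg _)
    rw [hLn]
    have h1 : (max ‖q x‖ ‖f x‖) ^ 2 ≤ ‖x‖ ^ 2 :=
      pow_le_pow_left₀ (by positivity) (max_le (hq1 x) (hf1 x)) 2
    have h2 : ‖q x‖ ^ 2 ≤ ‖x‖ ^ 2 := pow_le_pow_left₀ (by positivity) (hq1 x) 2
    nlinarith [sq_nonneg a, sq_nonneg b]
  have hlowq : ∀ x, ‖q x‖ ≤ ‖L x‖ := by
    intro x
    apply le_of_sq_le_sq _ (norm_nonneg _)
    rw [hLn]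
    have h1 : ‖q x‖ ^ 2 ≤ (max ‖q x‖ ‖f x‖) ^ 2 :=
      pow_le_pow_left₀ (by positivity) (le_max_left _ _) 2
    nlinarith [sq_nonneg a, sq_nonneg b]
  have hlow : ∀ x, k * ‖x‖ ≤ ‖L x‖ := fun x => (hq2 x).trans (hlowq x)
  have hLx₀ : a ≤ ‖L x₀‖ := by
    apply le_of_sq_le_sq _ (norm_nonneg _)
    rw [hLn]
    have h1 : (1 : ℝ) ^ 2 ≤ (max ‖q x₀‖ ‖f x₀‖) ^ 2 :=
      pow_le_pow_left₀ (by positivity) (by rw [hfx']; simp) 2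
    nlinarith [sq_nonneg a, sq_nonneg (b * ‖q x₀‖)]
  let V : Submodule ℝ (WithLp 2 ((X' × ℝ) × X')) := LinearMap.range (L : X →ₗ[ℝ] _)
  -- completeness of the range, transported from `X`
  have hcomp : CompleteSpace V := by
    have hanti : AntilipschitzWith (Real.toNNReal k⁻¹) L := by
      apply ContinuousLinearMap.antilipschitz_of_bound
      intro x
      rw [Real.coe_toNNReal _ (by positivity), inv_mul_eq_div, le_div_iff₀ hk, mul_comm]
      exact hlow x
    have := hanti.isComplete_range L.uniformContinuous
    have hV : IsComplete (V : Set (WithLp 2 ((X' × ℝ) × X'))) := by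
      simpa [V, LinearMap.coe_range] using this
    exact hV.completeSpace_coe
  let T : X →L[ℝ] V := L.codRestrict V (fun x => LinearMap.mem_range_self _ x)
  have hTn : ∀ x, ‖T x‖ = ‖L x‖ := fun x => rfl
  have hT1 : ‖T‖ ≤ 1 := T.opNorm_le_bound zero_le_one (fun x => by rw [hTn, one_mul]; exact hup x)
  have hTx₀ : ‖T x₀‖ ≤ ‖T‖ := by simpa [hx₀] using T.le_opNorm x₀
  have hTpos : 0 < ‖T‖ := ha0.trans_le ((hLx₀.trans_eq (hTn x₀).symm).trans hTx₀)
  obtain ⟨T', hT', hge⟩ := exists_normalized T hTpos hT1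
  refine ⟨V, inferInstance, inferInstance, hcomp, T', ?_, hT', hLx₀.trans (hge _),
    fun z => (hlow z).trans (hge z)⟩
  · rintro u ε hε
    obtain ⟨θ, hθ, H⟩ := quadLUR_of_uniformConvex X' (u : WithLp 2 ((X' × ℝ) × X')).snd
      (b * k * ε) (by positivity)
    refine ⟨θ, hθ, fun v hv => ?_⟩
    have h1 := H (v : WithLp 2 ((X' × ℝ) × X')).snd
      ((quad_snd (X' × ℝ) X' (u : WithLp 2 ((X' × ℝ) × X')) v).trans_lt hv)
    obtain ⟨z, hz⟩ : ∃ z, L z = ((v - u : V) : WithLp 2 ((X' × ℝ) × X')) := (v - u).2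
    have h2 : (v : WithLp 2 ((X' × ℝ) × X')).snd - (u : WithLp 2 ((X' × ℝ) × X')).snd
        = b • q z := by
      rw [← hsnd, hz]; rfl
    rw [h2, norm_smul, Real.norm_of_nonneg hb.le] at h1
    have h3 : ‖v - u‖ ≤ ‖z‖ := by
      have : ‖v - u‖ = ‖L z‖ := by rw [hz]; rfl
      rw [this]; exact hup z
    have h4 := hq2 z
    refine h3.trans_lt ?_
    have h5 : b * k * ‖z‖ < b * k * ε := by nlinarith
    exact lt_of_mul_lt_mul_left h5 (by positivity)

theorem exposed_near.{u} (X : Type u) [NormedAddCommGroup X] [NormedSpace ℝ X]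
    (Y : ℕ → Type u) [∀ n, NormedAddCommGroup (Y n)] [∀ n, NormedSpace ℝ (Y n)]
    (hbpb : HasBPBp X (lp Y ∞)) (hY : ∀ n, QuadLUR (Y n)) (T : ∀ n, X →L[ℝ] Y n)
    (hT : ∀ n, ‖T n‖ = 1) (k : ℝ) (hk : 0 < k) (hlow : ∀ n z, k * ‖z‖ ≤ ‖T n z‖)
    (x₀ : X) (hx₀ : ‖x₀‖ = 1) (hTx : ∀ n : ℕ, 1 - 1 / ((n : ℝ) + 2) ≤ ‖T n x₀‖)
    (r : ℝ) (hr : 0 < r) : ∃ x, StronglyExposedPointOfBall X x ∧ ‖x - x₀‖ < r := by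
  obtain ⟨η, hη, H⟩ := hbpb
  obtain ⟨ε, hε0, hε1, hεr, hεk⟩ : ∃ ε : ℝ, 0 < ε ∧ ε < 1 ∧ ε ≤ r ∧ ε ≤ k / 2 :=
    ⟨min (1 / 2) (min r (k / 2)), by positivity, (min_le_left _ _).trans_lt (by norm_num),
      (min_le_right _ _).trans (min_le_left _ _), (min_le_right _ _).trans (min_le_right _ _)⟩
  have hη0 := hη ε ⟨hε0, hε1⟩
  obtain ⟨n, hn⟩ := exists_nat_one_div_lt hη0
  have hn2 : 1 / ((n : ℝ) + 2) < η ε := by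
    refine lt_of_le_of_lt ?_ hn
    gcongr
    norm_num
  let J : Y n →ₗᵢ[ℝ] lp Y ∞ :=
    { toLinearMap := lp.lsingle ∞ n
      norm_map' := fun y => lp.norm_single (by simp) n y }
  have hJ : ∀ y, J y = lp.single ∞ n y := fun y => rfl
  let T₀ : X →L[ℝ] lp Y ∞ := J.toContinuousLinearMap.comp (T n)
  have hT₀ : ∀ z, T₀ z = lp.single ∞ n (T n z) := fun z => rfl
  have hT₀n : ‖T₀‖ = 1 := by
    rw [← hT n]; exact J.norm_toContinuousLinearMap_comp
  obtain ⟨S, x, hx, hS, hSx, hxx, hST⟩ := H ε ⟨hε0, hε1⟩ T₀ x₀ hT₀n hx₀ (by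
    rw [hT₀, lp.norm_single (by simp)]
    linarith [hTx n])
  have hdiff : ∀ z i, ‖S z i - T₀ z i‖ ≤ ε * ‖z‖ := by
    intro z i
    have h1 := lp.norm_apply_le_norm ENNReal.top_ne_zero ((S - T₀) z) i
    have h2 := (S - T₀).le_opNorm z
    have h3 : ((S - T₀) z) i = S z i - T₀ z i := rfl
    rw [h3] at h1
    nlinarith [norm_nonneg z]
  let P : X →L[ℝ] Y n := (lp.evalCLM ℝ Y ∞ n).comp S
  have hP : ∀ z, P z = S z n := fun z => rfl
  have hPle : ∀ z, ‖P z‖ ≤ ‖z‖ := by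
    intro z
    have h1 := lp.norm_apply_le_norm ENNReal.top_ne_zero (S z) n
    have h2 := S.le_opNorm z
    rw [hS, one_mul] at h2
    exact h1.trans h2
  have hP1 : ‖P‖ ≤ 1 := P.opNorm_le_bound zero_le_one (fun z => by rw [one_mul]; exact hPle z)
  have hPx : ‖P x‖ = 1 := by
    apply le_antisymm ((hPle x).trans hx.le)
    have h : ‖S x‖ ≤ max ‖P x‖ ε := by
      apply lp.norm_le_of_forall_le (by positivity)
      intro i
      by_cases hi : i = n
      · subst hi; exact le_max_left _ _
      · have h1 := hdiff x i
        rw [hT₀, lp.single_apply_ne _ _ _ hi, sub_zero, hx, mul_one] at h1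
        exact h1.trans (le_max_right _ _)
    rw [hSx] at h
    rcases le_max_iff.1 h with h | h
    · exact h
    · linarith
  refine ⟨x, stronglyExposed_of_attains (hY n) P x hx hP1 hPx (k / 2) (by positivity) ?_,
    hxx.trans_le hεr⟩
  intro z
  have h1 := hdiff z n
  rw [hT₀, lp.single_apply_self, ← hP] at h1
  have h2 := hlow n z
  have h3 : ‖T n z‖ ≤ ‖P z‖ + ‖P z - T n z‖ := by
    have : T n z = P z - (P z - T n z) := by abel
    calc ‖T n z‖ = ‖P z - (P z - T n z)‖ := by rw [← this]
      _ ≤ _ := norm_sub_le _ _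
  nlinarith [norm_nonneg z]

/-- If `X` is a universal BPB domain space and admits an equivalent uniformly convex norm
(i.e. there is a uniformly convex Banach space `X'` and a linear isomorphism `e : X ≃ₗ[ℝ] X'`
with `c‖x‖ ≤ ‖e x‖ ≤ C‖x‖`), then the strongly exposed points of the closed unit ball of `X`
are dense in the unit sphere of `X`. -/
theorem stronglyExposedPoints_dense_of_universal_BPB_domain.{u} (X : Type u)
    [NormedAddCommGroup X] [NormedSpace ℝ X] [CompleteSpace X]
    (huniv : ∀ (Z : Type u) [NormedAddCommGroup Z] [NormedSpace ℝ Z] [CompleteSpace Z],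
      HasBPBp X Z)
    (hren : ∃ (X' : Type u) (_ : NormedAddCommGroup X') (_ : NormedSpace ℝ X')
      (_ : CompleteSpace X') (_ : UniformConvexSpace X') (e : X ≃ₗ[ℝ] X') (c C : ℝ),
        0 < c ∧ 0 < C ∧ ∀ x : X, c * ‖x‖ ≤ ‖e x‖ ∧ ‖e x‖ ≤ C * ‖x‖) :
    Metric.sphere (0 : X) 1 ⊆ closure {x : X | StronglyExposedPointOfBall X x} := by
  obtain ⟨X', i1, i2, i3, i4, e, c, C, hc, hC, he⟩ := hren
  intro x₀ hx₀
  rw [mem_sphere_zero_iff_norm] at hx₀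
  have hqb : ∀ x, ‖((C⁻¹ : ℝ) • (e : X →ₗ[ℝ] X')) x‖ ≤ 1 * ‖x‖ := by
    intro x
    rw [LinearMap.smul_apply, norm_smul, Real.norm_of_nonneg (by positivity), one_mul,
      inv_mul_eq_div, div_le_iff₀ hC, mul_comm]
    exact (he x).2
  let q : X →L[ℝ] X' := LinearMap.mkContinuous ((C⁻¹ : ℝ) • (e : X →ₗ[ℝ] X')) 1 hqb
  have hq1 : ∀ x, ‖q x‖ ≤ ‖x‖ := fun x => (hqb x).trans_eq (one_mul _)
  have hq2 : ∀ x, c / C * ‖x‖ ≤ ‖q x‖ := by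
    intro x
    have h : q x = (C⁻¹ : ℝ) • e x := rfl
    rw [h, norm_smul, Real.norm_of_nonneg (by positivity), inv_mul_eq_div, div_mul_eq_mul_div]
    exact div_le_div_of_nonneg_right (he x).1 hC.le
  have hkey := fun n : ℕ => exists_good_target X X' q (c / C) (by positivity) hq1 hq2 x₀ hx₀
    (1 - 1 / ((n : ℝ) + 2))
    (by
      have h : 1 / ((n : ℝ) + 2) < 1 := by
        rw [div_lt_one (by positivity)]
        have : (0 : ℝ) ≤ n := n.cast_nonneg
        linarith
      linarith)
    (by
      have h : 0 < 1 / ((n : ℝ) + 2) := by positivity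
      linarith)
  choose Y j1 j2 j3 T hY hT hTx hlow using hkey
  rw [Metric.mem_closure_iff]
  intro r hr
  obtain ⟨x, hx, hxr⟩ := exposed_near X Y (huniv (lp Y ∞)) hY T hT (c / C) (by positivity) hlow
    x₀ hx₀ hTx r hr
  exact ⟨x, hx, by rwa [dist_comm, dist_eq_norm]⟩
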